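/- Finite-volume comparison of FK measures with different boundary conditions (inequality (2.3) of the uniqueness proof). Let (V, E, ends, α) be a finite graph with boundary condition, p ∈ (0,1), q > 0. Let V_Λ ⊆ V_Δ ⊆ V with V_Λ nonempty, let E_Δ := {e ∈ E : both endpoints of e lie in V_Δ}, let E_Λ := {e ∈ E : both endpoints of e lie in V_Λ}, let ∂V_Δ := {x ∈ V_Δ : x is an endpoint of an edge of E with an endpoint outside V_Δ} and similarly ∂V_Λ, and let β be an equivalence relation on V_Δ. Assume every nontrivial class of α contains no vertex of V_Δ∖∂V_Δ, and every nontrivial class of β is contained in ∂V_Δ. Then for every set A of functions E_Λ → Bool, |φ^α_{(V,E),p,q}({ω : ω|_{E_Λ} ∈ A}) − φ^β_{(V_Δ,E_Δ),p,q}({ω : ω|_{E_Λ} ∈ A})| ≤ P_{max(p,p')}({ω : some vertex of ∂V_Λ is joined to some vertex of ∂V_Δ by a path of ω-open edges of E_Δ}). -/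

import Mathlib

/-!
Compare both FK measures with a Bernoulli configuration of parameter `m = max p p'`. Given the
states of all other edges, an edge is open under an FK measure with probability `p` or `p'`,
according to whether its endpoints are otherwise connected, hence with probability at most `m`.
One can therefore reveal the edges of `E_Δ` one at a time, outwards from `∂V_Δ`, sampling the two
FK configurations and the Bernoulli configuration together so that the last dominates the other
two: always choose an edge touching the Bernoulli cluster of `∂V_Δ`. If the cluster reaches
`∂V_Λ`, bound the difference by `1`. Otherwise the exploration stops with a region that contains
`V_Λ`, is cut off from the rest by closed edges in both FK configurations, and avoids both wirings.
Single-edge conditional probabilities there depend only on the region, so the two conditional laws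
on it agree and the difference vanishes.
-/

open scoped Classical

noncomputable section

namespace FKPaper

variable {V E : Type*}

/-- One-step adjacency between wired vertices through an edge in `F`. -/
def Step (ends : E → Sym2 V) (α : Setoid V) (F : Set E) (x y : Quotient α) : Prop :=
  ∃ e ∈ F, Sym2.map (Quotient.mk α) (ends e) = s(x, y)

/-- Setoid of connected components of the wired multigraph with edge set `F`. -/
def connSetoid (ends : E → Sym2 V) (α : Setoid V) (F : Set E) : Setoid (Quotient α) :=
  Relation.EqvGen.setoid (Step ends α F)

/-- Connectivity in the wired multigraph with edge set `F`. -/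
def Conn (ends : E → Sym2 V) (α : Setoid V) (F : Set E) (x y : Quotient α) : Prop :=
  (connSetoid ends α F).r x y

/-- The two endpoints of `e` are joined in the wired multigraph with edge set `F`. -/
def EndsConn (ends : E → Sym2 V) (α : Setoid V) (F : Set E) (e : E) : Prop :=
  ∀ x y : V, ends e = s(x, y) → Conn ends α F (Quotient.mk α x) (Quotient.mk α y)

/-- Number of connected components `k(ω, α)`. -/
def numComponents (ends : E → Sym2 V) (α : Setoid V) (ω : E → Bool) : ℕ :=
  Nat.card (Quotient (connSetoid ends α {e | ω e = true}))

/-- `p' = p / (p + q (1 - p))`. -/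
def pPrime (p q : ℝ) : ℝ := p / (p + q * (1 - p))

/-- Total mass of a set under a weight function. -/
def massOf {ι : Type*} [Fintype ι] (w : ι → ℝ) (A : Set ι) : ℝ :=
  ∑ x ∈ Finset.univ.filter (· ∈ A), w x

/-- Normalized probability of a set under a weight function. -/
def probOf {ι : Type*} [Fintype ι] (w : ι → ℝ) (A : Set ι) : ℝ :=
  massOf w A / massOf w Set.univ

/-- FK weight of a configuration. -/
def fkWeight [Fintype E] (ends : E → Sym2 V) (α : Setoid V) (p q : ℝ) (ω : E → Bool) : ℝ :=
  p ^ (Finset.univ.filter fun e => ω e = true).card *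
    (1 - p) ^ (Finset.univ.filter fun e => ω e = false).card *
    q ^ numComponents ends α ω

/-- The FK (random cluster) probability measure `φ^α_{G,p,q}`. -/
def fkProb [Fintype E] (ends : E → Sym2 V) (α : Setoid V) (p q : ℝ)
    (A : Set (E → Bool)) : ℝ :=
  probOf (fkWeight ends α p q) A

/-- Inhomogeneous Bernoulli weight. -/
def berWeight [Fintype E] (pe : E → ℝ) (ω : E → Bool) : ℝ :=
  ∏ e, if ω e = true then pe e else 1 - pe e

/-- Inhomogeneous Bernoulli product measure `P_{(p_e)}`. -/
def berProb [Fintype E] (pe : E → ℝ) (A : Set (E → Bool)) : ℝ :=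
  probOf (berWeight pe) A

/-- Increasing sets of configurations. -/
def Increasing (A : Set (E → Bool)) : Prop :=
  ∀ ⦃ω ω' : E → Bool⦄, ω ∈ A → (∀ e, ω e ≤ ω' e) → ω' ∈ A

/-- Stochastic domination `μ ≼ ν`. -/
def StochDom [Fintype E] (μ ν : Set (E → Bool) → ℝ) : Prop :=
  ∀ A : Set (E → Bool), Increasing A → μ A ≤ ν A

/-- `Q_F(e)`: cutsets for `e` included in `F`. -/
def Cutsets (ends : E → Sym2 V) (α : Setoid V) (F : Set E) (e : E) : Set (Set E) :=
  {χ | χ ⊆ F ∧ ¬ EndsConn ends α {e' | e' ∉ χ ∧ e' ≠ e} e}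


/-- Edges whose both endpoints lie in `W`. -/
def edgesIn (ends : E → Sym2 V) (W : Set V) : Set E :=
  {e | ∀ x ∈ ends e, x ∈ W}

/-- The boundary `∂W`: vertices of `W` incident to an edge with an endpoint outside `W`. -/
def bdry (ends : E → Sym2 V) (W : Set V) : Set V :=
  {x | x ∈ W ∧ ∃ e : E, x ∈ ends e ∧ ∃ y ∈ ends e, y ∉ W}

/-- Vertex-level connectivity using only edges of `F` (no wiring). -/
def VConn (ends : E → Sym2 V) (F : Set E) (x y : V) : Prop :=
  Relation.ReflTransGen (fun a b => ∃ e ∈ F, ends e = s(a, b)) x y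

section Mass

variable {ι κ : Type*} [Fintype ι] {w : ι → ℝ}

theorem massOf_nonneg (hw : ∀ x, 0 ≤ w x) (A : Set ι) : 0 ≤ massOf w A :=
  Finset.sum_nonneg fun x _ => hw x

theorem massOf_mono (hw : ∀ x, 0 ≤ w x) {A B : Set ι} (h : A ⊆ B) : massOf w A ≤ massOf w B :=
  Finset.sum_le_sum_of_subset_of_nonneg (Finset.monotone_filter_right _ fun _ _ hx => h hx)
    fun x _ _ => hw x

theorem massOf_pos (hw : ∀ x, 0 < w x) {A : Set ι} (hA : A.Nonempty) : 0 < massOf w A :=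
  Finset.sum_pos (fun x _ => hw x) (hA.imp fun _ hx => by simpa using hx)

theorem massOf_congr {w' : ι → ℝ} {A : Set ι} (h : ∀ x ∈ A, w x = w' x) :
    massOf w A = massOf w' A :=
  Finset.sum_congr rfl fun x hx => h x (by simpa using hx)

theorem massOf_eq_sum_fiber [Fintype κ] (w : ι → ℝ) (X : ι → κ) (A : Set ι) :
    massOf w A = ∑ k, massOf w (A ∩ {x | X x = k}) := by
  simp only [massOf, Set.mem_inter_iff, Set.mem_ofPred_eq, ← Finset.filter_filter]
  exact (Finset.sum_fiberwise _ X w).symm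

/-- The conditional probability of `B` given `C` under the normalization of the weight `w`. -/
def condProb (w : ι → ℝ) (C B : Set ι) : ℝ :=
  massOf w (C ∩ B) / massOf w C

theorem condProb_univ (w : ι → ℝ) (B : Set ι) : condProb w Set.univ B = probOf w B := by
  rw [condProb, probOf, Set.univ_inter]

theorem condProb_nonneg (hw : ∀ x, 0 ≤ w x) (C B : Set ι) : 0 ≤ condProb w C B :=
  div_nonneg (massOf_nonneg hw _) (massOf_nonneg hw _)

theorem condProb_le_one (hw : ∀ x, 0 ≤ w x) (C B : Set ι) : condProb w C B ≤ 1 :=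
  div_le_one_of_le₀ (massOf_mono hw Set.inter_subset_left) (massOf_nonneg hw _)

theorem condProb_eq_one_of_subset (hw : ∀ x, 0 < w x) {C B : Set ι} (hC : C.Nonempty)
    (h : C ⊆ B) : condProb w C B = 1 := by
  rw [condProb, Set.inter_eq_left.2 h, div_self (massOf_pos hw hC).ne']

theorem condProb_eq_sum [Fintype κ] (hw : ∀ x, 0 ≤ w x) (X : ι → κ) (C B : Set ι) :
    condProb w C B =
      ∑ k, condProb w C {x | X x = k} * condProb w (C ∩ {x | X x = k}) B := by
  rw [condProb, massOf_eq_sum_fiber w X, Finset.sum_div]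
  refine Finset.sum_congr rfl fun k _ => ?_
  have hzero : massOf w (C ∩ {x | X x = k}) = 0 → massOf w (C ∩ {x | X x = k} ∩ B) = 0 :=
    fun h => le_antisymm (h ▸ massOf_mono hw Set.inter_subset_left) (massOf_nonneg hw _)
  rw [condProb, condProb, div_mul_eq_mul_div, mul_div_cancel_of_imp' hzero, Set.inter_right_comm]

theorem sum_condProb_fiber [Fintype κ] (hw : ∀ x, 0 < w x) (X : ι → κ) {C : Set ι}
    (hC : C.Nonempty) : ∑ k, condProb w C {x | X x = k} = 1 := by
  simp only [condProb]
  rw [← Finset.sum_div, ← massOf_eq_sum_fiber, div_self (massOf_pos hw hC).ne']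

end Mass

section Coupling

theorem abs_mixture_sub_mixture_le_of_le {c₁ c₂ m : ℝ} {f₁ f₂ g : Bool → ℝ} (hc₁ : 0 ≤ c₁)
    (hc : c₁ ≤ c₂) (hc₂ : c₂ ≤ m) (hm : m ≤ 1)
    (h : ∀ b₁ b₂ b, b₁ ≤ b → b₂ ≤ b → |f₁ b₁ - f₂ b₂| ≤ g b) :
    |(c₁ * f₁ true + (1 - c₁) * f₁ false) - (c₂ * f₂ true + (1 - c₂) * f₂ false)| ≤
      m * g true + (1 - m) * g false := by
  -- One uniform variable, compared with `c₁`, `c₂` and `m`, samples the three mixtures jointly.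
  have hmul : ∀ {t : ℝ} {b₁ b₂ b : Bool}, 0 ≤ t → b₁ ≤ b → b₂ ≤ b →
      |t * (f₁ b₁ - f₂ b₂)| ≤ t * g b := fun ht hb₁ hb₂ => by
    rw [abs_mul, abs_of_nonneg ht]
    exact mul_le_mul_of_nonneg_left (h _ _ _ hb₁ hb₂) ht
  have hboth := abs_le.1 (hmul hc₁ (le_refl true) le_rfl)
  have hsecond := abs_le.1 (hmul (sub_nonneg.2 hc) (Bool.false_le true) (le_refl true))
  have hthird := abs_le.1 (hmul (sub_nonneg.2 hc₂) (Bool.false_le true) (Bool.false_le true))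
  have hnone := abs_le.1 (hmul (sub_nonneg.2 hm) (le_refl false) le_rfl)
  rw [abs_le]
  constructor <;> linarith

theorem abs_mixture_sub_mixture_le {c₁ c₂ m : ℝ} {f₁ f₂ g : Bool → ℝ} (hc₁ : 0 ≤ c₁)
    (hc₂ : 0 ≤ c₂) (hm₁ : c₁ ≤ m) (hm₂ : c₂ ≤ m) (hm : m ≤ 1)
    (h : ∀ b₁ b₂ b, b₁ ≤ b → b₂ ≤ b → |f₁ b₁ - f₂ b₂| ≤ g b) :
    |(c₁ * f₁ true + (1 - c₁) * f₁ false) - (c₂ * f₂ true + (1 - c₂) * f₂ false)| ≤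
      m * g true + (1 - m) * g false := by
  rcases le_total c₁ c₂ with hc | hc
  · exact abs_mixture_sub_mixture_le_of_le hc₁ hc hm₂ hm h
  · rw [abs_sub_comm]
    refine abs_mixture_sub_mixture_le_of_le hc₂ hc hm₁ hm fun b₁ b₂ b hb₁ hb₂ => ?_
    rw [abs_sub_comm]
    exact h b₂ b₁ b hb₂ hb₁

end Coupling

section EdgeProb

variable {w w₁ w₂ : (E → Bool) → ℝ} {e : E} {ω ω₁ ω₂ : E → Bool} {C C₁ C₂ B B₁ B₂ : Set (E → Bool)}
  {F : Set E} {m : ℝ}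

/-- The conditional probability, under the normalization of `w`, that `e` is open given that all
other edges are as in `ω`. -/
def edgeProb (w : (E → Bool) → ℝ) (e : E) (ω : E → Bool) : ℝ :=
  w (Function.update ω e true) /
    (w (Function.update ω e true) + w (Function.update ω e false))

theorem edgeProb_eq_of_update {s c : ℝ} (hc : c ≠ 0)
    (htrue : w (Function.update ω e true) = s * c)
    (hfalse : w (Function.update ω e false) = (1 - s) * c) : edgeProb w e ω = s := by
  rw [edgeProb, htrue, hfalse, ← add_mul, add_sub_cancel, one_mul, mul_div_cancel_right₀ _ hc]

theorem edgeProb_update (w : (E → Bool) → ℝ) (e : E) (ω : E → Bool) (b : Bool) :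
    edgeProb w e (Function.update ω e b) = edgeProb w e ω := by
  simp only [edgeProb, Function.update_idem]

theorem div_update_eq_div_of_edgeProb_eq (hw₁ : ∀ ω, 0 < w₁ ω) (hw₂ : ∀ ω, 0 < w₂ ω)
    (he : ω₁ e = ω₂ e) (h : edgeProb w₁ e ω₁ = edgeProb w₂ e ω₂) (b : Bool) :
    w₁ (Function.update ω₁ e b) / w₂ (Function.update ω₂ e b) = w₁ ω₁ / w₂ ω₂ := by
  have hratio : w₁ (Function.update ω₁ e true) / w₂ (Function.update ω₂ e true) =
      w₁ (Function.update ω₁ e false) / w₂ (Function.update ω₂ e false) := by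
    rw [edgeProb, edgeProb, div_eq_div_iff (add_pos (hw₁ _) (hw₁ _)).ne'
      (add_pos (hw₂ _) (hw₂ _)).ne'] at h
    rw [div_eq_div_iff (hw₂ _).ne' (hw₂ _).ne']
    linarith
  have hconst : ∀ c, w₁ (Function.update ω₁ e c) / w₂ (Function.update ω₂ e c) =
      w₁ (Function.update ω₁ e false) / w₂ (Function.update ω₂ e false)
    | true => hratio
    | false => rfl
  conv_rhs => rw [← Function.update_eq_self e ω₁, ← Function.update_eq_self e ω₂, ← he]
  rw [hconst b, hconst (ω₁ e)]

theorem update_mem_iff (hC : DependsOn (· ∈ C) {e}ᶜ) (b : Bool) :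
    Function.update ω e b ∈ C ↔ ω ∈ C :=
  iff_of_eq <| hC fun _ hi => Function.update_of_ne hi _ _

theorem piecewise_mem_iff (hC : DependsOn (· ∈ C) Fᶜ) : F.piecewise ω₁ ω₂ ∈ C ↔ ω₂ ∈ C :=
  iff_of_eq <| hC fun _ hi => F.piecewise_eq_of_notMem _ _ hi

theorem eq_of_forall_update_eq {ι β : Type*} {π : ι → Type*} [Finite ι] {f : (∀ i, π i) → β}
    (h : ∀ x i (v : π i), f (Function.update x i v) = f x) (x y : ∀ i, π i) : f x = f y := by
  have := Fintype.ofFinite ι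
  have hpiecewise : ∀ s : Finset ι, f (s.piecewise x y) = f y := fun s => by
    induction s using Finset.induction_on with
    | empty => rw [Finset.piecewise_empty]
    | insert i s _ ih => rw [Finset.piecewise_insert, h, ih]
  rw [← hpiecewise Finset.univ, Finset.piecewise_univ]

theorem mul_eq_mul_piecewise_of_edgeProb_eq [Finite E] (hw₁ : ∀ ω, 0 < w₁ ω)
    (hw₂ : ∀ ω, 0 < w₂ ω) (hC₁ : DependsOn (· ∈ C₁) Fᶜ) (hC₂ : DependsOn (· ∈ C₂) Fᶜ)
    (h : ∀ e ∈ F, ∀ ω₁ ∈ C₁, ∀ ω₂ ∈ C₂, Set.EqOn ω₁ ω₂ F → edgeProb w₁ e ω₁ = edgeProb w₂ e ω₂)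
    (hω₁ : ω₁ ∈ C₁) (hω₂ : ω₂ ∈ C₂) :
    w₁ ω₁ * w₂ ω₂ = w₁ (F.piecewise ω₂ ω₁) * w₂ (F.piecewise ω₁ ω₂) := by
  have hconst : ∀ τ e b,
      w₁ (F.piecewise (Function.update τ e b) ω₁) / w₂ (F.piecewise (Function.update τ e b) ω₂) =
        w₁ (F.piecewise τ ω₁) / w₂ (F.piecewise τ ω₂) := fun τ e b => by
    by_cases he : e ∈ F
    · have hupdate : ∀ ω, F.piecewise (Function.update τ e b) ω =
          Function.update (F.piecewise τ ω) e b := fun ω => by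
        ext i
        by_cases hi : i = e
        · subst hi; simp [he]
        · simp [Set.piecewise, hi]
      rw [hupdate, hupdate]
      refine div_update_eq_div_of_edgeProb_eq hw₁ hw₂ (by simp [he]) (h e he _ ?_ _ ?_ ?_) b
      · exact (piecewise_mem_iff hC₁).2 hω₁
      · exact (piecewise_mem_iff hC₂).2 hω₂
      · exact fun i hi => by simp [hi]
    · have hupdate : ∀ ω, F.piecewise (Function.update τ e b) ω = F.piecewise τ ω := fun ω => by
        ext i
        by_cases hi : i ∈ F
        · simp [hi, ne_of_mem_of_not_mem hi he]
        · simp [hi]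
      rw [hupdate, hupdate]
  have hswap := eq_of_forall_update_eq
    (f := fun τ => w₁ (F.piecewise τ ω₁) / w₂ (F.piecewise τ ω₂)) hconst ω₁ ω₂
  beta_reduce at hswap
  rwa [F.piecewise_same, F.piecewise_same, div_eq_div_iff (hw₂ _).ne' (hw₂ _).ne'] at hswap

variable [Fintype E]

theorem massOf_eq_massOf_update_add (hC : DependsOn (· ∈ C) {e}ᶜ) (w : (E → Bool) → ℝ) :
    massOf w C = massOf (fun ω => w (Function.update ω e true) + w (Function.update ω e false))
      (C ∩ {ω | ω e = true}) := by
  have hself : ∀ (ω : E → Bool) b, ω e = b → Function.update ω e b = ω := fun ω b hωe => by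
    rw [← hωe, Function.update_eq_self]
  have htrue : massOf w (C ∩ {ω | ω e = true}) =
      massOf (fun ω => w (Function.update ω e true)) (C ∩ {ω | ω e = true}) :=
    massOf_congr fun ω ⟨_, hωe⟩ => by rw [hself ω true hωe]
  have hfalse : massOf w (C ∩ {ω | ω e = false}) =
      massOf (fun ω => w (Function.update ω e false)) (C ∩ {ω | ω e = true}) := by
    refine Finset.sum_nbij' (Function.update · e true) (Function.update · e false)
      (by simp +contextual [update_mem_iff hC]) (by simp +contextual [update_mem_iff hC])
      ?_ ?_ ?_ <;> simp +contextual [hself]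
  rw [massOf_eq_sum_fiber w (· e), Fintype.sum_bool, htrue, hfalse]
  exact Finset.sum_add_distrib.symm

theorem massOf_inter_open (hw : ∀ ω, 0 < w ω) (hC : DependsOn (· ∈ C) {e}ᶜ) :
    massOf w (C ∩ {ω | ω e = true}) = massOf (fun ω => edgeProb w e ω * w ω) C := by
  rw [massOf_eq_massOf_update_add hC]
  refine massOf_congr fun ω ⟨_, (hωe : ω e = true)⟩ => ?_
  rw [edgeProb_update, edgeProb_update, ← mul_add, edgeProb,
    div_mul_cancel₀ _ (add_pos (hw _) (hw _)).ne', ← hωe, Function.update_eq_self]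

theorem condProb_open_le (hw : ∀ ω, 0 < w ω) (hC : DependsOn (· ∈ C) {e}ᶜ)
    (hne : C.Nonempty) (h : ∀ ω, edgeProb w e ω ≤ m) : condProb w C {ω | ω e = true} ≤ m := by
  rw [condProb, div_le_iff₀ (massOf_pos hw hne), massOf_inter_open hw hC, massOf, massOf,
    Finset.mul_sum]
  exact Finset.sum_le_sum fun ω _ => mul_le_mul_of_nonneg_right (h ω) (hw ω).le

theorem condProb_open_eq (hw : ∀ ω, 0 < w ω) (hC : DependsOn (· ∈ C) {e}ᶜ)
    (hne : C.Nonempty) (h : ∀ ω, edgeProb w e ω = m) : condProb w C {ω | ω e = true} = m := by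
  rw [condProb, div_eq_iff (massOf_pos hw hne).ne', massOf_inter_open hw hC, massOf, massOf,
    Finset.mul_sum]
  exact Finset.sum_congr rfl fun ω _ => by rw [h ω]

theorem condProb_eq_mixture (hw : ∀ ω, 0 < w ω) (hne : C.Nonempty) (e : E)
    (B : Set (E → Bool)) :
    condProb w C B =
      condProb w C {ω | ω e = true} * condProb w (C ∩ {ω | ω e = true}) B +
        (1 - condProb w C {ω | ω e = true}) * condProb w (C ∩ {ω | ω e = false}) B := by
  have htotal := sum_condProb_fiber hw (· e) hne
  rw [Fintype.sum_bool] at htotal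
  rw [condProb_eq_sum (fun ω => (hw ω).le) (· e) C B, Fintype.sum_bool, ← htotal,
    add_sub_cancel_left]

theorem abs_condProb_sub_le_of_reveal (hw₁ : ∀ ω, 0 < w₁ ω) (hw₂ : ∀ ω, 0 < w₂ ω)
    (hw : ∀ ω, 0 < w ω) (hC₁ : DependsOn (· ∈ C₁) {e}ᶜ) (hC₂ : DependsOn (· ∈ C₂) {e}ᶜ)
    (hC : DependsOn (· ∈ C) {e}ᶜ) (hne₁ : C₁.Nonempty) (hne₂ : C₂.Nonempty) (hne : C.Nonempty)
    (h₁ : ∀ ω, edgeProb w₁ e ω ≤ m) (h₂ : ∀ ω, edgeProb w₂ e ω ≤ m)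
    (h : ∀ ω, edgeProb w e ω = m)
    (hreveal : ∀ b₁ b₂ b, b₁ ≤ b → b₂ ≤ b →
      |condProb w₁ (C₁ ∩ {ω | ω e = b₁}) B₁ - condProb w₂ (C₂ ∩ {ω | ω e = b₂}) B₂| ≤
        condProb w (C ∩ {ω | ω e = b}) B) :
    |condProb w₁ C₁ B₁ - condProb w₂ C₂ B₂| ≤ condProb w C B := by
  have hm : condProb w C {ω | ω e = true} = m := condProb_open_eq hw hC hne h
  rw [condProb_eq_mixture hw₁ hne₁ e, condProb_eq_mixture hw₂ hne₂ e,
    condProb_eq_mixture hw hne e, hm]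
  refine abs_mixture_sub_mixture_le (condProb_nonneg (fun ω => (hw₁ ω).le) _ _)
    (condProb_nonneg (fun ω => (hw₂ ω).le) _ _) (condProb_open_le hw₁ hC₁ hne₁ h₁)
    (condProb_open_le hw₂ hC₂ hne₂ h₂) ?_ hreveal
  exact hm ▸ condProb_le_one (fun ω => (hw ω).le) _ _

theorem condProb_eq_of_edgeProb_eq (hw₁ : ∀ ω, 0 < w₁ ω) (hw₂ : ∀ ω, 0 < w₂ ω)
    (hC₁ : DependsOn (· ∈ C₁) Fᶜ) (hC₂ : DependsOn (· ∈ C₂) Fᶜ) (hne₁ : C₁.Nonempty)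
    (hne₂ : C₂.Nonempty) (hB : DependsOn (· ∈ B) F)
    (h : ∀ e ∈ F, ∀ ω₁ ∈ C₁, ∀ ω₂ ∈ C₂, Set.EqOn ω₁ ω₂ F → edgeProb w₁ e ω₁ = edgeProb w₂ e ω₂) :
    condProb w₁ C₁ B = condProb w₂ C₂ B := by
  have hBmem : ∀ ω ω', F.piecewise ω ω' ∈ B ↔ ω ∈ B := fun ω ω' =>
    iff_of_eq <| hB fun _ hi => F.piecewise_eq_of_mem _ _ hi
  have hinv : ∀ ω ω' : E → Bool, F.piecewise (F.piecewise ω ω') (F.piecewise ω' ω) = ω :=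
    fun ω ω' => by ext i; by_cases hi : i ∈ F <;> simp [hi]
  -- Exchanging the `F`-coordinates of an independent pair preserves its weight.
  rw [condProb, condProb, div_eq_div_iff (massOf_pos hw₁ hne₁).ne' (massOf_pos hw₂ hne₂).ne',
    mul_comm (massOf w₂ _)]
  simp only [massOf, Finset.sum_mul_sum, ← Finset.sum_product']
  refine Finset.sum_nbij' (fun x => (F.piecewise x.2 x.1, F.piecewise x.1 x.2))
    (fun x => (F.piecewise x.2 x.1, F.piecewise x.1 x.2)) ?_ ?_ ?_ ?_ ?_
  · simp +contextual [piecewise_mem_iff hC₁, piecewise_mem_iff hC₂, hBmem]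
  · simp +contextual [piecewise_mem_iff hC₁, piecewise_mem_iff hC₂, hBmem]
  · exact fun x _ => Prod.ext (hinv _ _) (hinv _ _)
  · exact fun x _ => Prod.ext (hinv _ _) (hinv _ _)
  · intro x hx
    simp only [Finset.mem_product, Finset.mem_filter, Finset.mem_univ, true_and] at hx
    exact mul_eq_mul_piecewise_of_edgeProb_eq hw₁ hw₂ hC₁ hC₂ h hx.1.1 hx.2

end EdgeProb

section Components

/-- The coarsening of the equivalence relation `r` in which the classes of `a` and `b` are
identified. -/
def mergeClasses {X : Type*} (r : Setoid X) (a b : X) : Setoid X :=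
  Setoid.ker fun x => Function.update id (Quotient.mk r b) (Quotient.mk r a) (Quotient.mk r x)

section MergeClasses

variable {X : Type*} {r s : Setoid X} {a b : X}

theorem le_mergeClasses : r ≤ mergeClasses r a b := fun _ _ h =>
  congrArg (Function.update id _ _) (Quotient.sound h)

theorem mergeClasses_rel : mergeClasses r a b a b := by
  by_cases h : Quotient.mk r a = Quotient.mk r b
  · exact le_mergeClasses (Quotient.exact h)
  · exact Setoid.ker_def.2 (by simp [Function.update_of_ne h])

theorem mergeClasses_le (hr : r ≤ s) (hab : s a b) : mergeClasses r a b ≤ s := by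
  intro x y hxy
  have hmap : ∀ z, s a b → ∃ z', s z z' ∧
      Function.update id (Quotient.mk r b) (Quotient.mk r a) (Quotient.mk r z) =
        Quotient.mk r z' := fun z hab => by
    by_cases hz : Quotient.mk r z = Quotient.mk r b
    · exact ⟨a, s.trans (hr (Quotient.exact hz)) (s.symm hab), by simp [hz]⟩
    · exact ⟨z, s.refl z, by simp [hz]⟩
  obtain ⟨x', hx, hx'⟩ := hmap x hab
  obtain ⟨y', hy, hy'⟩ := hmap y hab
  have hxy' : r x' y' := Quotient.exact (hx'.symm.trans (hxy.trans hy'))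
  exact s.trans hx (s.trans (hr hxy') (s.symm hy))

theorem mergeClasses_eq_self (hab : r a b) : mergeClasses r a b = r :=
  le_antisymm (mergeClasses_le le_rfl hab) le_mergeClasses

theorem card_quotient_mergeClasses_add_one [Finite X] (hab : ¬ r a b) :
    Nat.card (Quotient (mergeClasses r a b)) + 1 = Nat.card (Quotient r) := by
  have hrange : Set.range (fun x =>
      Function.update id (Quotient.mk r b) (Quotient.mk r a) (Quotient.mk r x)) =
      {Quotient.mk r b}ᶜ := by
    ext c
    constructor
    · rintro ⟨x, rfl⟩
      by_cases hx : Quotient.mk r x = Quotient.mk r b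
      · simpa [hx] using mt Quotient.exact hab
      · simp [hx]
    · induction c using Quotient.inductionOn with
      | _ x => exact fun hx => ⟨x, Function.update_of_ne hx _ _⟩
  rw [mergeClasses, Nat.card_congr (Setoid.quotientKerEquivRange _), hrange,
    Nat.card_coe_set_eq, ← Set.ncard_singleton (Quotient.mk r b), add_comm,
    Set.ncard_add_ncard_compl]

end MergeClasses

variable {ends : E → Sym2 V} {α : Setoid V} {F : Set E} {e : E} {a b : V}

theorem endsConn_iff (he : ends e = s(a, b)) :
    EndsConn ends α F e ↔ Conn ends α F (Quotient.mk α a) (Quotient.mk α b) := by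
  refine ⟨fun h => h a b he, fun h x y hxy => ?_⟩
  rcases Sym2.eq_iff.1 (he.symm.trans hxy) with ⟨rfl, rfl⟩ | ⟨rfl, rfl⟩
  · exact h
  · exact (connSetoid ends α F).symm h

theorem connSetoid_insert (he : ends e = s(a, b)) :
    connSetoid ends α (insert e F) =
      mergeClasses (connSetoid ends α F) (Quotient.mk α a) (Quotient.mk α b) := by
  refine le_antisymm (Setoid.eqvGen_le ?_) (mergeClasses_le (Setoid.eqvGen_mono ?_) ?_)
  · rintro x y ⟨e', rfl | he', hxy⟩
    · rw [he, Sym2.map_mk, Sym2.eq_iff] at hxy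
      rcases hxy with ⟨rfl, rfl⟩ | ⟨rfl, rfl⟩
      · exact mergeClasses_rel
      · exact Setoid.symm' _ mergeClasses_rel
    · exact le_mergeClasses (Relation.EqvGen.rel _ _ ⟨e', he', hxy⟩)
  · exact fun x y ⟨e', he', hxy⟩ => ⟨e', Set.mem_insert_of_mem e he', hxy⟩
  · exact Relation.EqvGen.rel _ _ ⟨e, Set.mem_insert e F, by rw [he, Sym2.map_mk]⟩

theorem connSetoid_insert_of_endsConn (h : EndsConn ends α F e) :
    connSetoid ends α (insert e F) = connSetoid ends α F := by
  induction he : ends e with | _ a b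
  rw [connSetoid_insert he]
  exact mergeClasses_eq_self ((endsConn_iff he).1 h)

theorem card_connSetoid_insert_add_one [Finite V] (h : ¬ EndsConn ends α F e) :
    Nat.card (Quotient (connSetoid ends α (insert e F))) + 1 =
      Nat.card (Quotient (connSetoid ends α F)) := by
  induction he : ends e with | _ a b
  rw [connSetoid_insert he]
  exact card_quotient_mergeClasses_add_one fun hab => h ((endsConn_iff he).2 hab)

/-- The edges of `S` that are open in `ω`. -/
def openEdges (S : Set E) (ω : E → Bool) : Set E :=
  {e | e ∈ S ∧ ω e = true}

theorem openEdges_mono {S S' : Set E} {ω ω' : E → Bool} (hS : S ⊆ S')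
    (h : ∀ e ∈ S, ω e ≤ ω' e) : openEdges S ω ⊆ openEdges S' ω' :=
  fun e he => ⟨hS he.1, Bool.eq_true_of_true_le (he.2 ▸ h e he.1)⟩

theorem setOf_update_true (ω : E → Bool) (e : E) :
    {e' | Function.update ω e true e' = true} = insert e (openEdges {e}ᶜ ω) := by
  ext e'
  by_cases he : e' = e <;> simp [openEdges, he]

theorem setOf_update_false (ω : E → Bool) (e : E) :
    {e' | Function.update ω e false e' = true} = openEdges {e}ᶜ ω := by
  ext e'
  by_cases he : e' = e <;> simp [openEdges, he]

theorem numComponents_update_true_of_endsConn {ω : E → Bool}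
    (h : EndsConn ends α (openEdges {e}ᶜ ω) e) :
    numComponents ends α (Function.update ω e true) =
      numComponents ends α (Function.update ω e false) := by
  rw [numComponents, numComponents, setOf_update_true, setOf_update_false,
    connSetoid_insert_of_endsConn h]

theorem numComponents_update_true_add_one [Finite V] {ω : E → Bool}
    (h : ¬ EndsConn ends α (openEdges {e}ᶜ ω) e) :
    numComponents ends α (Function.update ω e true) + 1 =
      numComponents ends α (Function.update ω e false) := by
  rw [numComponents, numComponents, setOf_update_true, setOf_update_false,
    card_connSetoid_insert_add_one h]

end Components

section Weights

variable {pe : E → ℝ} {p q : ℝ}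

theorem pPrime_lt_one (hp : p ∈ Set.Ioo (0 : ℝ) 1) (hq : 0 < q) : pPrime p q < 1 := by
  have hclosed : 0 < q * (1 - p) := mul_pos hq (sub_pos.2 hp.2)
  rw [pPrime, div_lt_one (add_pos hp.1 hclosed)]
  exact lt_add_of_pos_right p hclosed

theorem berWeight_pos [Fintype E] (hpe : ∀ e, pe e ∈ Set.Ioo (0 : ℝ) 1) (ω : E → Bool) :
    0 < berWeight pe ω :=
  Finset.prod_pos fun e _ => by split_ifs <;> linarith [(hpe e).1, (hpe e).2]

theorem berWeight_update [Fintype E] (pe : E → ℝ) (ω : E → Bool) (e : E) (b : Bool) :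
    berWeight pe (Function.update ω e b) = (if b = true then pe e else 1 - pe e) *
      ∏ e' ∈ Finset.univ.erase e, if ω e' = true then pe e' else 1 - pe e' := by
  rw [berWeight, ← Finset.mul_prod_erase _ _ (Finset.mem_univ e), Function.update_self]
  congr 1
  exact Finset.prod_congr rfl fun e' he' => by
    rw [Function.update_of_ne (Finset.ne_of_mem_erase he')]

theorem edgeProb_berWeight [Fintype E] (hpe : ∀ e, pe e ∈ Set.Ioo (0 : ℝ) 1) (e : E)
    (ω : E → Bool) : edgeProb (berWeight pe) e ω = pe e := by
  refine edgeProb_eq_of_update (Finset.prod_pos fun e' _ => ?_).ne'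
    ((berWeight_update pe ω e true).trans (by rw [if_pos rfl]))
    ((berWeight_update pe ω e false).trans (by rw [if_neg Bool.false_ne_true]))
  split_ifs <;> linarith [(hpe e').1, (hpe e').2]

theorem fkWeight_eq_berWeight_mul [Fintype E] (ends : E → Sym2 V) (α : Setoid V) (p q : ℝ)
    (ω : E → Bool) :
    fkWeight ends α p q ω = berWeight (fun _ => p) ω * q ^ numComponents ends α ω := by
  rw [fkWeight, berWeight, Finset.prod_ite, Finset.prod_const, Finset.prod_const]
  simp only [Bool.not_eq_true]

theorem fkWeight_pos [Fintype E] (ends : E → Sym2 V) (α : Setoid V)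
    (hp : p ∈ Set.Ioo (0 : ℝ) 1) (hq : 0 < q) (ω : E → Bool) : 0 < fkWeight ends α p q ω := by
  rw [fkWeight_eq_berWeight_mul]
  exact mul_pos (berWeight_pos (fun _ => hp) ω) (pow_pos hq _)

theorem edgeProb_fkWeight [Finite V] [Fintype E] (ends : E → Sym2 V) (α : Setoid V)
    (hp : p ∈ Set.Ioo (0 : ℝ) 1) (hq : 0 < q) (e : E) (ω : E → Bool) :
    edgeProb (fkWeight ends α p q) e ω =
      if EndsConn ends α (openEdges {e}ᶜ ω) e then p else pPrime p q := by
  have hrest : 0 < ∏ e' ∈ Finset.univ.erase e, if ω e' = true then p else 1 - p :=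
    Finset.prod_pos fun e' _ => by split_ifs <;> linarith [hp.1, hp.2]
  have hnorm : 0 < p + q * (1 - p) := add_pos hp.1 (mul_pos hq (sub_pos.2 hp.2))
  have hopen : pPrime p q * (p + q * (1 - p)) = p := div_mul_cancel₀ _ hnorm.ne'
  have hclosed : (1 - pPrime p q) * (p + q * (1 - p)) = q * (1 - p) := by
    rw [sub_mul, one_mul, hopen, add_sub_cancel_left]
  split_ifs with hconn
  · refine edgeProb_eq_of_update
      (mul_pos hrest (pow_pos hq (numComponents ends α (Function.update ω e false)))).ne' ?_ ?_
    · rw [fkWeight_eq_berWeight_mul, berWeight_update, if_pos rfl,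
        numComponents_update_true_of_endsConn hconn, mul_assoc]
    · rw [fkWeight_eq_berWeight_mul, berWeight_update, if_neg Bool.false_ne_true, mul_assoc]
  · refine edgeProb_eq_of_update (mul_pos hnorm (mul_pos hrest
      (pow_pos hq (numComponents ends α (Function.update ω e true))))).ne' ?_ ?_
    · rw [fkWeight_eq_berWeight_mul, berWeight_update, if_pos rfl, ← mul_assoc (pPrime p q),
        hopen, mul_assoc]
    · rw [fkWeight_eq_berWeight_mul, berWeight_update, if_neg Bool.false_ne_true,
        ← numComponents_update_true_add_one hconn, ← mul_assoc (1 - pPrime p q), hclosed, pow_succ]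
      ring

end Weights

section Isolated

variable {E' : Type*} {ends : E → Sym2 V} {α : Setoid V} {F G : Set E} {W : Set V} {x y : V}
  {p q : ℝ}

theorem VConn.mono (hFG : F ⊆ G) (h : VConn ends F x y) : VConn ends G x y :=
  Relation.ReflTransGen.mono (fun _ _ ⟨e, he, hxy⟩ => ⟨e, hFG he, hxy⟩) _ _ h

theorem vConn_comp_iff (f : E' → E) (F : Set E') :
    VConn (ends ∘ f) F x y ↔ VConn ends (f '' F) x y := by
  simp only [VConn, Set.exists_mem_image, Function.comp_apply]

theorem conn_iff_reflTransGen {u v : Quotient α} :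
    Conn ends α F u v ↔ Relation.ReflTransGen (Step ends α F) u v := by
  have : Std.Symm (Step ends α F) := ⟨fun u v ⟨e, he, huv⟩ => ⟨e, he, huv.trans Sym2.eq_swap⟩⟩
  rw [← Relation.EqvGen.eqvGen_eq_reflTransGen]
  rfl

theorem VConn.conn (h : VConn ends F x y) : Conn ends α F (Quotient.mk α x) (Quotient.mk α y) :=
  conn_iff_reflTransGen.2 <| Relation.ReflTransGen.lift (Quotient.mk α)
    (fun _ _ ⟨e, he, hab⟩ => ⟨e, he, by rw [hab, Sym2.map_mk]⟩) _ _ h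

/-- No edge of `F` joins `W` to its complement. -/
def IsIsolated (ends : E → Sym2 V) (F : Set E) (W : Set V) : Prop :=
  ∀ e ∈ F, ∀ x ∈ ends e, x ∈ W → e ∈ edgesIn ends W

theorem conn_iff_vConn (hα : ∀ x y, α x y → x ∈ W → x = y) (hF : IsIsolated ends F W)
    (hx : x ∈ W) :
    Conn ends α F (Quotient.mk α x) (Quotient.mk α y) ↔ VConn ends (F ∩ edgesIn ends W) x y := by
  refine ⟨fun h => ?_, fun h => (h.mono Set.inter_subset_left).conn⟩
  have hlift : ∀ v, Relation.ReflTransGen (Step ends α F) (Quotient.mk α x) v →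
      ∃ z ∈ W, Quotient.mk α z = v ∧ VConn ends (F ∩ edgesIn ends W) x z := fun v hv => by
    induction hv with
    | refl => exact ⟨x, hx, rfl, .refl⟩
    | @tail _ v _ hstep ih =>
      obtain ⟨z, hz, rfl, hxz⟩ := ih
      obtain ⟨e, he, hzv⟩ := hstep
      have hzmap : Quotient.mk α z ∈ Sym2.map (Quotient.mk α) (ends e) := by
        rw [hzv]; exact Sym2.mem_mk_left _ _
      obtain ⟨z', hz', hzz'⟩ := Sym2.mem_map.1 hzmap
      obtain rfl := hα z z' (Quotient.exact hzz'.symm) hz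
      obtain ⟨y, hy⟩ := hz'
      have heW : e ∈ edgesIn ends W := hF e he z (hy ▸ Sym2.mem_mk_left _ _) hz
      refine ⟨y, heW y (hy ▸ Sym2.mem_mk_right _ _), ?_, hxz.tail ⟨e, ⟨he, heW⟩, hy⟩⟩
      rwa [hy, Sym2.map_mk, Sym2.congr_right] at hzv
  obtain ⟨z, hz, hzy, hxz⟩ := hlift _ (conn_iff_reflTransGen.1 h)
  exact hα z y (Quotient.exact hzy) hz ▸ hxz

theorem edgeProb_comp {f : E' → E} (hf : Function.Injective f) (w : (E' → Bool) → ℝ) (e : E')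
    (ω : E → Bool) : edgeProb (fun ω => w (ω ∘ f)) (f e) ω = edgeProb w e (ω ∘ f) := by
  simp only [edgeProb, Function.update_comp_eq_of_injective _ hf]

theorem edgeProb_fkWeight_comp_le [Finite V] [Fintype E'] {f : E' → E}
    (hf : Function.Injective f) (hp : p ∈ Set.Ioo (0 : ℝ) 1) (hq : 0 < q) {e : E}
    (he : e ∈ Set.range f) (ω : E → Bool) :
    edgeProb (fun ω => fkWeight (ends ∘ f) α p q (ω ∘ f)) e ω ≤ max p (pPrime p q) := by
  obtain ⟨e, rfl⟩ := he
  rw [edgeProb_comp hf (fkWeight (ends ∘ f) α p q), edgeProb_fkWeight _ _ hp hq]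
  split_ifs
  exacts [le_max_left _ _, le_max_right _ _]

theorem edgeProb_fkWeight_comp_of_isIsolated [Finite V] [Fintype E'] {f : E' → E}
    (hf : Function.Injective f) (hp : p ∈ Set.Ioo (0 : ℝ) 1) (hq : 0 < q)
    (hα : ∀ x y, α x y → x ∈ W → x = y) (hW : edgesIn ends W ⊆ Set.range f) {ω : E → Bool}
    (hω : IsIsolated ends {e | ω e = true} W) {e : E} (he : e ∈ edgesIn ends W) :
    edgeProb (fun ω => fkWeight (ends ∘ f) α p q (ω ∘ f)) e ω =
      if ∀ x y, ends e = s(x, y) → VConn ends (openEdges (edgesIn ends W \ {e}) ω) x y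
      then p else pPrime p q := by
  obtain ⟨e, rfl⟩ := hW he
  rw [edgeProb_comp hf (fkWeight (ends ∘ f) α p q), edgeProb_fkWeight _ _ hp hq]
  have himage : f '' (openEdges {e}ᶜ (ω ∘ f) ∩ edgesIn (ends ∘ f) W) =
      openEdges (edgesIn ends W \ {f e}) ω := by
    ext e'
    constructor
    · rintro ⟨e', ⟨⟨hne, hopen⟩, heW⟩, rfl⟩
      exact ⟨⟨heW, hf.ne hne⟩, hopen⟩
    · rintro ⟨⟨heW, hne⟩, hopen⟩
      obtain ⟨e', rfl⟩ := hW heW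
      exact ⟨e', ⟨⟨ne_of_apply_ne f hne, hopen⟩, heW⟩, rfl⟩
  have hisolated : IsIsolated (ends ∘ f) (openEdges {e}ᶜ (ω ∘ f)) W :=
    fun e' he' => hω (f e') he'.2
  refine if_congr (forall₂_congr fun x y => forall_congr' fun (hxy : ends (f e) = s(x, y)) => ?_)
    rfl rfl
  have hx : x ∈ W := he x (hxy ▸ Sym2.mem_mk_left x y)
  rw [conn_iff_vConn hα hisolated hx, vConn_comp_iff, himage]

end Isolated

section Exploration

variable {ends : E → Sym2 V} {D F F' : Set E} {e : E} {ξ ξ₁ ξ₂ η ω : E → Bool} {b : Bool}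
  {R U VΛ VΔ : Set V} {x y : V} {w w₁ w₂ : (E → Bool) → ℝ} {m : ℝ} {A : Set (E → Bool)}

/-- The event that the configuration coincides with `ξ` on the revealed edges `D`. -/
def cylinder (D : Set E) (ξ : E → Bool) : Set (E → Bool) :=
  {ω | Set.EqOn ω ξ D}

theorem cylinder_nonempty : (cylinder D ξ).Nonempty :=
  ⟨ξ, Set.eqOn_refl ξ D⟩

theorem cylinder_empty (ξ : E → Bool) : cylinder ∅ ξ = Set.univ :=
  Set.eq_univ_of_forall fun ω => Set.eqOn_empty ω ξ

theorem cylinder_insert (he : e ∉ D) (ξ : E → Bool) (b : Bool) :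
    cylinder (insert e D) (Function.update ξ e b) = cylinder D ξ ∩ {ω | ω e = b} := by
  have hξ : Set.EqOn (Function.update ξ e b) ξ D := fun i hi =>
    Function.update_of_ne (ne_of_mem_of_not_mem hi he) b ξ
  ext ω
  simp only [cylinder, Set.insert_eq, Set.mem_ofPred_eq, Set.eqOn_union, Set.eqOn_singleton,
    Function.update_self, Set.mem_inter_iff]
  exact and_comm.trans (and_congr_left' ⟨(·.trans hξ), (·.trans hξ.symm)⟩)

theorem dependsOn_cylinder (hDF : D ⊆ F) : DependsOn (· ∈ cylinder D ξ) F := fun ω ω' h => by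
  have hD : Set.EqOn ω ω' D := fun i hi => h i (hDF hi)
  exact propext ⟨hD.symm.trans, hD.trans⟩

theorem edgesIn_mono (h : VΛ ⊆ VΔ) : edgesIn ends VΛ ⊆ edgesIn ends VΔ :=
  fun _ he x hx => h (he x hx)

/-- The vertices joined to `R` by a path of edges of `F`. -/
def cluster (ends : E → Sym2 V) (R : Set V) (F : Set E) : Set V :=
  {x | ∃ y ∈ R, VConn ends F x y}

theorem cluster_mono (h : F ⊆ F') : cluster ends R F ⊆ cluster ends R F' :=
  fun _ ⟨y, hy, hxy⟩ => ⟨y, hy, hxy.mono h⟩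

theorem subset_cluster : R ⊆ cluster ends R F :=
  fun x hx => ⟨x, hx, .refl⟩

theorem mem_cluster_of_edge (he : e ∈ F) (hx : x ∈ ends e) (hy : y ∈ ends e)
    (hyC : y ∈ cluster ends R F) : x ∈ cluster ends R F := by
  rcases eq_or_ne x y with rfl | hxy
  · exact hyC
  · obtain ⟨z, hz, hyz⟩ := hyC
    exact ⟨z, hz, .head ⟨e, he, (Sym2.mem_and_mem_iff hxy).1 ⟨hx, hy⟩⟩ hyz⟩

theorem bdry_inter_cluster_nonempty (hΛΔ : VΛ ⊆ VΔ) (hx : x ∈ VΛ)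
    (hxC : x ∈ cluster ends (bdry ends VΔ) F) :
    (bdry ends VΛ ∩ cluster ends (bdry ends VΔ) F).Nonempty := by
  obtain ⟨y, hy, hxy⟩ := hxC
  induction hxy using Relation.ReflTransGen.head_induction_on with
  | refl =>
    obtain ⟨-, e, hye, z, hz, hzΔ⟩ := id hy
    exact ⟨y, ⟨hx, e, hye, z, hz, mt (@hΛΔ z) hzΔ⟩, y, hy, .refl⟩
  | @head x z hstep hzy ih =>
    by_cases hz : z ∈ VΛ
    · exact ih hz
    · obtain ⟨e, -, hxz⟩ := id hstep
      exact ⟨x, ⟨hx, e, hxz ▸ Sym2.mem_mk_left x z, z, hxz ▸ Sym2.mem_mk_right x z, hz⟩,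
        y, hy, .head hstep hzy⟩

/-- A state of the exploration of `VΔ` from its boundary: every revealed edge lies in `VΔ` and
touches the cluster of the boundary in the revealed part of `η`. -/
structure IsExplored (ends : E → Sym2 V) (VΔ : Set V) (D : Set E) (η : E → Bool) : Prop where
  subset : D ⊆ edgesIn ends VΔ
  meets : ∀ e ∈ D, ∃ x ∈ ends e, x ∈ cluster ends (bdry ends VΔ) (openEdges D η)

theorem isExplored_empty (ends : E → Sym2 V) (VΔ : Set V) (η : E → Bool) :
    IsExplored ends VΔ ∅ η where
  subset := Set.empty_subset _
  meets := fun _ he => absurd he (Set.notMem_empty _)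

theorem IsExplored.insert_update (h : IsExplored ends VΔ D η) (he : e ∈ edgesIn ends VΔ)
    (heD : e ∉ D) (hx : x ∈ ends e)
    (hxC : x ∈ cluster ends (bdry ends VΔ) (openEdges D η)) (b : Bool) :
    IsExplored ends VΔ (insert e D) (Function.update η e b) where
  subset := Set.insert_subset he h.subset
  meets := by
    have hmono : cluster ends (bdry ends VΔ) (openEdges D η) ⊆
        cluster ends (bdry ends VΔ) (openEdges (insert e D) (Function.update η e b)) :=
      cluster_mono <| openEdges_mono (Set.subset_insert e D) fun i hi => by
        rw [Function.update_of_ne (ne_of_mem_of_not_mem hi heD)]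
    rintro e' (rfl | he')
    · exact ⟨x, hx, hmono hxC⟩
    · obtain ⟨y, hy, hyC⟩ := h.meets e' he'
      exact ⟨y, hy, hmono hyC⟩

theorem IsExplored.disjoint (h : IsExplored ends VΔ D η) :
    Disjoint D (edgesIn ends (VΔ \ cluster ends (bdry ends VΔ) (openEdges D η))) :=
  Set.disjoint_left.2 fun e he heW =>
    let ⟨x, hx, hxC⟩ := h.meets e he
    (heW x hx).2 hxC

theorem isIsolated_diff_cluster
    (hterminal : ∀ e ∈ edgesIn ends VΔ, e ∉ D →
      ∀ x ∈ ends e, x ∉ cluster ends (bdry ends VΔ) (openEdges D η))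
    (hω : ∀ e ∈ D, ω e ≤ η e) :
    IsIsolated ends {e | ω e = true}
      (VΔ \ cluster ends (bdry ends VΔ) (openEdges D η)) := by
  rintro e he x hx ⟨hxΔ, hxC⟩
  have heΔ : e ∈ edgesIn ends VΔ := fun y hy => by
    by_contra hyΔ
    exact hxC (subset_cluster ⟨hxΔ, e, hx, y, hy, hyΔ⟩)
  refine fun y hy => ⟨heΔ y hy, fun hyC => hxC ?_⟩
  have heD : e ∈ D := by
    by_contra heD
    exact hterminal e heΔ heD y hy hyC
  have hηe : η e = true := Bool.eq_true_of_true_le (he ▸ hω e heD)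
  exact mem_cluster_of_edge ⟨heD, hηe⟩ hx hy hyC

/-- Around any isolated region inside `U`, the single-edge conditional probabilities of `w₁` and
`w₂` are determined by the configuration inside the region, in the same way for both. -/
def AgreeOnIsolated (ends : E → Sym2 V) (U : Set V) (w₁ w₂ : (E → Bool) → ℝ) : Prop :=
  ∀ W ⊆ U, ∀ ω₁ ω₂ : E → Bool, IsIsolated ends {e | ω₁ e = true} W →
    IsIsolated ends {e | ω₂ e = true} W → Set.EqOn ω₁ ω₂ (edgesIn ends W) →
      ∀ e ∈ edgesIn ends W, edgeProb w₁ e ω₁ = edgeProb w₂ e ω₂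

variable [Fintype E]

theorem condProb_cylinder_eq_of_terminal (hw₁ : ∀ ω, 0 < w₁ ω) (hw₂ : ∀ ω, 0 < w₂ ω)
    (hagree : AgreeOnIsolated ends (VΔ \ bdry ends VΔ) w₁ w₂) (hΛΔ : VΛ ⊆ VΔ)
    (hA : DependsOn (· ∈ A) (edgesIn ends VΛ)) (hD : IsExplored ends VΔ D η)
    (hξ₁ : ∀ e ∈ D, ξ₁ e ≤ η e) (hξ₂ : ∀ e ∈ D, ξ₂ e ≤ η e)
    (hdisconnected : ¬ (bdry ends VΛ ∩ cluster ends (bdry ends VΔ) (openEdges D η)).Nonempty)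
    (hterminal : ∀ e ∈ edgesIn ends VΔ, e ∉ D →
      ∀ x ∈ ends e, x ∉ cluster ends (bdry ends VΔ) (openEdges D η)) :
    condProb w₁ (cylinder D ξ₁) A = condProb w₂ (cylinder D ξ₂) A := by
  set W : Set V := VΔ \ cluster ends (bdry ends VΔ) (openEdges D η)
  have hisolated : ∀ ξ : E → Bool, (∀ e ∈ D, ξ e ≤ η e) → ∀ ω ∈ cylinder D ξ,
      IsIsolated ends {e | ω e = true} W := fun ξ hξ ω hω =>
    isIsolated_diff_cluster hterminal fun e he => (hω he).trans_le (hξ e he)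
  have hΛW : VΛ ⊆ W := fun x hx =>
    ⟨hΛΔ hx, fun hxC => hdisconnected (bdry_inter_cluster_nonempty hΛΔ hx hxC)⟩
  have hDW : D ⊆ (edgesIn ends W)ᶜ := hD.disjoint.subset_compl_right
  refine condProb_eq_of_edgeProb_eq hw₁ hw₂ (dependsOn_cylinder hDW) (dependsOn_cylinder hDW)
    cylinder_nonempty cylinder_nonempty (DependsOn.mono (edgesIn_mono hΛW) hA)
    fun e he ω₁ hω₁ ω₂ hω₂ heq => ?_
  exact hagree W (Set.sdiff_subset_sdiff_right subset_cluster) ω₁ ω₂ (hisolated ξ₁ hξ₁ ω₁ hω₁)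
    (hisolated ξ₂ hξ₂ ω₂ hω₂) heq e he

theorem abs_condProb_cylinder_sub_le (hw₁ : ∀ ω, 0 < w₁ ω) (hw₂ : ∀ ω, 0 < w₂ ω)
    (hw : ∀ ω, 0 < w ω) (hm₁ : ∀ e ∈ edgesIn ends VΔ, ∀ ω, edgeProb w₁ e ω ≤ m)
    (hm₂ : ∀ e ∈ edgesIn ends VΔ, ∀ ω, edgeProb w₂ e ω ≤ m)
    (hm : ∀ e ∈ edgesIn ends VΔ, ∀ ω, edgeProb w e ω = m)
    (hagree : AgreeOnIsolated ends (VΔ \ bdry ends VΔ) w₁ w₂) (hΛΔ : VΛ ⊆ VΔ)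
    (hA : DependsOn (· ∈ A) (edgesIn ends VΛ)) (hD : IsExplored ends VΔ D η)
    (hξ₁ : ∀ e ∈ D, ξ₁ e ≤ η e) (hξ₂ : ∀ e ∈ D, ξ₂ e ≤ η e) :
    |condProb w₁ (cylinder D ξ₁) A - condProb w₂ (cylinder D ξ₂) A| ≤
      condProb w (cylinder D η)
        {ω | (bdry ends VΛ ∩
          cluster ends (bdry ends VΔ) (openEdges (edgesIn ends VΔ) ω)).Nonempty} := by
  induction D using WellFoundedGT.induction generalizing η ξ₁ ξ₂ with | _ D ih
  by_cases hconnected : (bdry ends VΛ ∩ cluster ends (bdry ends VΔ) (openEdges D η)).Nonempty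
  · rw [condProb_eq_one_of_subset hw cylinder_nonempty]
    · refine (abs_sub_le_of_le_of_le (condProb_nonneg (fun ω => (hw₁ ω).le) _ _)
        (condProb_le_one (fun ω => (hw₁ ω).le) _ _) (condProb_nonneg (fun ω => (hw₂ ω).le) _ _)
        (condProb_le_one (fun ω => (hw₂ ω).le) _ _)).trans_eq (sub_zero 1)
    · exact fun ω hω => hconnected.mono <| Set.inter_subset_inter_right _ <| cluster_mono <|
        openEdges_mono hD.subset fun e he => (hω he).ge
  by_cases hterminal : ∀ e ∈ edgesIn ends VΔ, e ∉ D →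
      ∀ x ∈ ends e, x ∉ cluster ends (bdry ends VΔ) (openEdges D η)
  · rw [condProb_cylinder_eq_of_terminal hw₁ hw₂ hagree hΛΔ hA hD hξ₁ hξ₂ hconnected hterminal,
      sub_self, abs_zero]
    exact condProb_nonneg (fun ω => (hw ω).le) _ _
  · push Not at hterminal
    obtain ⟨e, he, heD, x, hx, hxC⟩ := hterminal
    have hDe : D ⊆ {e}ᶜ := Set.subset_compl_singleton_iff.2 heD
    refine abs_condProb_sub_le_of_reveal (e := e) hw₁ hw₂ hw (dependsOn_cylinder hDe)
      (dependsOn_cylinder hDe) (dependsOn_cylinder hDe) cylinder_nonempty cylinder_nonempty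
      cylinder_nonempty (hm₁ e he) (hm₂ e he) (hm e he) fun b₁ b₂ b hb₁ hb₂ => ?_
    rw [← cylinder_insert heD, ← cylinder_insert heD, ← cylinder_insert heD]
    have hupdate : ∀ {ξ : E → Bool} {b' : Bool}, (∀ i ∈ D, ξ i ≤ η i) → b' ≤ b →
        ∀ i ∈ insert e D, Function.update ξ e b' i ≤ Function.update η e b i := by
      rintro ξ b' hξ hb' i (rfl | hi)
      · simpa using hb'
      · simpa [ne_of_mem_of_not_mem hi heD] using hξ i hi
    exact ih _ (Set.ssubset_insert heD) (hD.insert_update he heD hx hxC b) (hupdate hξ₁ hb₁)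
      (hupdate hξ₂ hb₂)

theorem abs_probOf_sub_le (hw₁ : ∀ ω, 0 < w₁ ω) (hw₂ : ∀ ω, 0 < w₂ ω) (hw : ∀ ω, 0 < w ω)
    (hm₁ : ∀ e ∈ edgesIn ends VΔ, ∀ ω, edgeProb w₁ e ω ≤ m)
    (hm₂ : ∀ e ∈ edgesIn ends VΔ, ∀ ω, edgeProb w₂ e ω ≤ m)
    (hm : ∀ e ∈ edgesIn ends VΔ, ∀ ω, edgeProb w e ω = m)
    (hagree : AgreeOnIsolated ends (VΔ \ bdry ends VΔ) w₁ w₂) (hΛΔ : VΛ ⊆ VΔ)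
    (hA : DependsOn (· ∈ A) (edgesIn ends VΛ)) :
    |probOf w₁ A - probOf w₂ A| ≤ probOf w {ω | ∃ x ∈ bdry ends VΛ, ∃ y ∈ bdry ends VΔ,
      VConn ends (openEdges (edgesIn ends VΔ) ω) x y} := by
  let ξ : E → Bool := fun _ => true
  simp only [← condProb_univ, ← cylinder_empty ξ]
  exact abs_condProb_cylinder_sub_le hw₁ hw₂ hw hm₁ hm₂ hm hagree hΛΔ hA
    (isExplored_empty ends VΔ ξ) (fun _ _ => le_rfl) fun _ _ => le_rfl

end Exploration

section Embedding

variable {E' : Type*} [Fintype E] [Fintype E'] {f : E' → E}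

theorem sum_comp_injective {β : Type*} [Fintype β] (hf : Function.Injective f)
    (g : (E' → β) → ℝ) :
    ∑ ω : E → β, g (ω ∘ f) = Fintype.card ({e // e ∉ Set.range f} → β) * ∑ τ, g τ := by
  let split : (E → β) ≃ (E' → β) × ({e // e ∉ Set.range f} → β) :=
    (Equiv.piEquivPiSubtypeProd (· ∈ Set.range f) fun _ => β).trans <|
      ((Equiv.ofInjective f hf).symm.arrowCongr (Equiv.refl β)).prodCongr (Equiv.refl _)
  rw [Fintype.sum_equiv split (fun ω => g (ω ∘ f)) (fun τρ => g τρ.1) fun _ => rfl,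
    Fintype.sum_prod_type, Finset.mul_sum]
  simp only [Finset.sum_const, Finset.card_univ, nsmul_eq_mul]

theorem probOf_comp_injective (hf : Function.Injective f) (w : (E' → Bool) → ℝ)
    (B : Set (E' → Bool)) :
    probOf (fun ω : E → Bool => w (ω ∘ f)) {ω | ω ∘ f ∈ B} = probOf w B := by
  have hmass : ∀ B : Set (E' → Bool),
      massOf (fun ω : E → Bool => w (ω ∘ f)) {ω | ω ∘ f ∈ B} =
        Fintype.card ({e // e ∉ Set.range f} → Bool) * massOf w B := fun B => by
    simp only [massOf, Finset.sum_filter]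
    exact sum_comp_injective hf fun τ => if τ ∈ B then w τ else 0
  have hcard : (Fintype.card ({e // e ∉ Set.range f} → Bool) : ℝ) ≠ 0 :=
    Nat.cast_ne_zero.2 Fintype.card_ne_zero
  exact (congrArg₂ (· / ·) (hmass B) (hmass Set.univ)).trans (mul_div_mul_left _ _ hcard)

theorem fkProb_eq_probOf_comp {S : Set E} {g : S → E'} (hf : Function.Injective f)
    (hg : ∀ e, f (g e) = e) (ends : E → Sym2 V) (α : Setoid V) (p q : ℝ) (A : Set (S → Bool)) :
    fkProb (ends ∘ f) α p q {ω | ω ∘ g ∈ A} =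
      probOf (fun ω => fkWeight (ends ∘ f) α p q (ω ∘ f)) {ω | ω ∘ Subtype.val ∈ A} := by
  rw [fkProb, ← probOf_comp_injective hf]
  simp only [Set.mem_ofPred_eq, Function.comp_assoc]
  rw [show f ∘ g = Subtype.val from funext hg]

end Embedding

theorem agreeOnIsolated_fkWeight_comp [Finite V] {E₁ E₂ : Type*} [Fintype E₁] [Fintype E₂]
    {ends : E → Sym2 V} {U : Set V} {f₁ : E₁ → E} {f₂ : E₂ → E} {α₁ α₂ : Setoid V} {p q : ℝ}
    (hp : p ∈ Set.Ioo (0 : ℝ) 1) (hq : 0 < q) (hf₁ : Function.Injective f₁)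
    (hf₂ : Function.Injective f₂) (hU₁ : edgesIn ends U ⊆ Set.range f₁)
    (hU₂ : edgesIn ends U ⊆ Set.range f₂) (hα₁ : ∀ x y, α₁ x y → x ∈ U → x = y)
    (hα₂ : ∀ x y, α₂ x y → x ∈ U → x = y) :
    AgreeOnIsolated ends U (fun ω => fkWeight (ends ∘ f₁) α₁ p q (ω ∘ f₁))
      (fun ω => fkWeight (ends ∘ f₂) α₂ p q (ω ∘ f₂)) := by
  intro W hWU ω₁ ω₂ hω₁ hω₂ heq e he
  have hopen : openEdges (edgesIn ends W \ {e}) ω₁ = openEdges (edgesIn ends W \ {e}) ω₂ :=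
    Set.ext fun e' => and_congr_right fun he' => by rw [heq he'.1]
  rw [edgeProb_fkWeight_comp_of_isIsolated hf₁ hp hq (fun x y h hx => hα₁ x y h (hWU hx))
      ((edgesIn_mono hWU).trans hU₁) hω₁ he,
    edgeProb_fkWeight_comp_of_isIsolated hf₂ hp hq (fun x y h hx => hα₂ x y h (hWU hx))
      ((edgesIn_mono hWU).trans hU₂) hω₂ he, hopen]

theorem finite_volume_comparison_general {V E E₁ E₂ : Type*} [Finite V] [Fintype E] [Fintype E₁]
    [Fintype E₂] (ends : E → Sym2 V) (f₁ : E₁ ↪ E) (f₂ : E₂ ↪ E) (α₁ α₂ : Setoid V) (p q : ℝ)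
    (hp : p ∈ Set.Ioo (0 : ℝ) 1) (hq : 0 < q) (VΛ VΔ : Set V) (hΛΔ : VΛ ⊆ VΔ)
    (hf₁ : edgesIn ends VΔ ⊆ Set.range f₁) (hf₂ : edgesIn ends VΔ ⊆ Set.range f₂)
    (hα₁ : ∀ x y, α₁ x y → x ∈ VΔ \ bdry ends VΔ → x = y)
    (hα₂ : ∀ x y, α₂ x y → x ∈ VΔ \ bdry ends VΔ → x = y)
    (g₁ : edgesIn ends VΛ → E₁) (g₂ : edgesIn ends VΛ → E₂) (hg₁ : ∀ e, f₁ (g₁ e) = e)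
    (hg₂ : ∀ e, f₂ (g₂ e) = e) (A : Set (edgesIn ends VΛ → Bool)) :
    |fkProb (ends ∘ f₁) α₁ p q {ω | ω ∘ g₁ ∈ A} - fkProb (ends ∘ f₂) α₂ p q {ω | ω ∘ g₂ ∈ A}| ≤
      berProb (fun _ : E => max p (pPrime p q))
        {ω | ∃ x ∈ bdry ends VΛ, ∃ y ∈ bdry ends VΔ,
          VConn ends {e | e ∈ edgesIn ends VΔ ∧ ω e = true} x y} := by
  have hmax : max p (pPrime p q) ∈ Set.Ioo (0 : ℝ) 1 :=
    ⟨lt_max_of_lt_left hp.1, max_lt hp.2 (pPrime_lt_one hp hq)⟩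
  have hinterior : edgesIn ends (VΔ \ bdry ends VΔ) ⊆ edgesIn ends VΔ :=
    edgesIn_mono Set.sdiff_subset
  rw [fkProb_eq_probOf_comp f₁.injective hg₁, fkProb_eq_probOf_comp f₂.injective hg₂]
  exact abs_probOf_sub_le (fun _ => fkWeight_pos _ α₁ hp hq _) (fun _ => fkWeight_pos _ α₂ hp hq _)
    (berWeight_pos fun _ => hmax)
    (fun _ he => edgeProb_fkWeight_comp_le f₁.injective hp hq (hf₁ he))
    (fun _ he => edgeProb_fkWeight_comp_le f₂.injective hp hq (hf₂ he))
    (fun e _ => edgeProb_berWeight (fun _ => hmax) e)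
    (agreeOnIsolated_fkWeight_comp hp hq f₁.injective f₂.injective (hinterior.trans hf₁)
      (hinterior.trans hf₂) hα₁ hα₂)
    hΛΔ fun _ _ h => congrArg (· ∈ A) (funext fun e => h e e.2)

/-- **Finite-volume comparison of FK measures with different boundary conditions**
(inequality (2.3) of the uniqueness proof).  The measure with boundary condition `β` on the
subgraph `(V_Δ, E_Δ)` is modeled with vertex type `V` and edge type `↥E_Δ`; the wiring `β`
is an equivalence relation on `V` whose nontrivial classes are contained in `∂V_Δ` (extra
isolated vertices only multiply all FK weights by a constant power of `q`, which cancels in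
the normalization). -/
theorem finite_volume_comparison
    {V E : Type*} [Fintype V] [Fintype E]
    (ends : E → Sym2 V) (α β : Setoid V)
    (p q : ℝ) (hp : p ∈ Set.Ioo (0 : ℝ) 1) (hq : 0 < q)
    (VΛ VΔ : Set V) (hΛΔ : VΛ ⊆ VΔ) (hΛ : VΛ.Nonempty)
    (hα : ∀ x y : V, α.r x y → x ≠ y → x ∉ VΔ \ bdry ends VΔ ∧ y ∉ VΔ \ bdry ends VΔ)
    (hβ : ∀ x y : V, β.r x y → x ≠ y → x ∈ bdry ends VΔ ∧ y ∈ bdry ends VΔ)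
    (A : Set (↥(edgesIn ends VΛ) → Bool)) :
    |fkProb ends α p q
        {ω | (fun e : ↥(edgesIn ends VΛ) => ω e.1) ∈ A}
      - fkProb (fun e : ↥(edgesIn ends VΔ) => ends e.1) β p q
          {ω | (fun e : ↥(edgesIn ends VΛ) => ω ⟨e.1, fun x hx => hΛΔ (e.2 x hx)⟩) ∈ A}|
      ≤ berProb (fun _ : E => max p (pPrime p q))
          {ω | ∃ x ∈ bdry ends VΛ, ∃ y ∈ bdry ends VΔ,
            VConn ends {e | e ∈ edgesIn ends VΔ ∧ ω e = true} x y} :=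
  finite_volume_comparison_general ends (.refl E) (.subtype _) α β p q hp hq VΛ VΔ hΛΔ
    (fun e _ => ⟨e, rfl⟩) (fun e he => ⟨⟨e, he⟩, rfl⟩)
    (fun x y h hx => by_contra fun hne => (hα x y h hne).1 hx)
    (fun x y h hx => by_contra fun hne => hx.2 (hβ x y h hne).1)
    Subtype.val (fun e => ⟨e.1, fun x hx => hΛΔ (e.2 x hx)⟩) (fun _ => rfl) (fun _ => rfl) A

end FKPaper
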